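/- Let G = (V, E) be a finite simple graph with vertex capacities C : V → ℤ_{>0}, and let S and O be two capacitated matchings (each vertex v is incident to at most C(v) edges of S, and to at most C(v) edges of O). If every edge of O \ S has at least one endpoint v such that the number of edges of S incident to v is at least C(v)/2, then |O \ S| ≤ 4·|S|. -/

import Mathlib

open Finset

/-- A finite simple graph presented via an abstract edge type: each edge has a
set of exactly two endpoints, and distinct edges have distinct endpoint sets. -/
structure GraphEdges (V E : Type) where
  ends : E → Finset V
  card_ends : ∀ e, (ends e).card = 2
  ends_injective : Function.Injective ends

/-- A capacitated matching: each vertex `v` is incident to at most `C v`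
of its edges. -/
def GraphEdges.IsCapMatching {V E : Type} [DecidableEq V] (G : GraphEdges V E)
    (C : V → ℕ) (M : Finset E) : Prop :=
  ∀ v, (M.filter (fun e => v ∈ G.ends e)).card ≤ C v

/-- If `S` and `O` are capacitated matchings and every edge
of `O \ S` has an endpoint `v` whose `S`-degree is at least `C v / 2`,
then `|O \ S| ≤ 4|S|`. -/
theorem cap_charging
    {V E : Type} [DecidableEq V] [DecidableEq E]
    (G : GraphEdges V E) (C : V → ℕ) (hC : ∀ v, 0 < C v)
    (S O : Finset E)
    (hS : G.IsCapMatching C S) (hO : G.IsCapMatching C O)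
    (h : ∀ e ∈ O \ S, ∃ v ∈ G.ends e,
        C v ≤ 2 * (S.filter (fun f => v ∈ G.ends f)).card) :
    (O \ S).card ≤ 4 * S.card := by
  classical
  set W := (S.biUnion G.ends).filter
    (fun v => C v ≤ 2 * (S.filter (fun f => v ∈ G.ends f)).card) with hW
  have h1 : O \ S ⊆ W.biUnion (fun v => O.filter (fun e => v ∈ G.ends e)) := by
    intro e he
    obtain ⟨v, hv, hc⟩ := h e he
    have hpos : 0 < (S.filter (fun f => v ∈ G.ends f)).card := by
      have := hC v
      omega
    obtain ⟨f, hf⟩ := Finset.card_pos.mp hpos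
    rw [Finset.mem_filter] at hf
    rw [Finset.mem_biUnion]
    refine ⟨v, ?_, ?_⟩
    · rw [hW, Finset.mem_filter, Finset.mem_biUnion]
      exact ⟨⟨f, hf.1, hf.2⟩, hc⟩
    · rw [Finset.mem_filter]
      exact ⟨(Finset.mem_sdiff.mp he).1, hv⟩
  have h2 : ∑ v ∈ W, (S.filter (fun f => v ∈ G.ends f)).card ≤ 2 * S.card := by
    have h3 := Finset.sum_card_bipartiteAbove_eq_sum_card_bipartiteBelow
      (s := W) (t := S) (fun v f => v ∈ G.ends f)
    simp only [Finset.bipartiteAbove, Finset.bipartiteBelow] at h3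
    rw [h3, mul_comm]
    refine (Finset.sum_le_card_nsmul S _ 2 ?_).trans (le_of_eq (smul_eq_mul _ _))
    intro f _
    rw [← G.card_ends f]
    apply Finset.card_le_card
    intro v hv
    exact (Finset.mem_filter.mp hv).2
  calc (O \ S).card ≤ ∑ v ∈ W, (O.filter (fun e => v ∈ G.ends e)).card :=
        (Finset.card_le_card h1).trans Finset.card_biUnion_le
    _ ≤ ∑ v ∈ W, 2 * (S.filter (fun f => v ∈ G.ends f)).card :=
        Finset.sum_le_sum (fun v hv => (hO v).trans (Finset.mem_filter.mp hv).2)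
    _ ≤ 4 * S.card := by
        rw [← Finset.mul_sum]
        omega
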